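/- For every integer k ≥ 3 there exist a real ε > 0 and a positive integer n₀ such that the following holds. Let n > n₀ and let s be an integer with n(1/k − 1/(2k²)) − 1 < s ≤ (n − k + 1)/k. If F ⊆ binom([n],k) is an s-saturated k-graph with ν(F) ≤ s and (1−ε)ks ≤ ω(F) ≤ ks + k − 3, then |F| ≤ C(ks+k−1, k) − 3.98·C(⌈(1−ε)ks⌉, k−1) + (2 + 8εk⁴)·C(n, k−1). -/

import Mathlib

/-- The `(x,y)`-shift of a single edge `A` with respect to the family `F`. -/
def shiftEdge (x y : ℕ) (F : Finset (Finset ℕ)) (A : Finset ℕ) : Finset ℕ :=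
  if y ∈ A ∧ x ∉ A ∧ insert x (A.erase y) ∉ F then insert x (A.erase y) else A

/-- The `(x,y)`-shift of a family `F`. -/
def shiftFam (x y : ℕ) (F : Finset (Finset ℕ)) : Finset (Finset ℕ) :=
  F.image (shiftEdge x y F)

/-- The matching number: the largest size of a pairwise-disjoint subfamily. -/
noncomputable def matchingNumber (F : Finset (Finset ℕ)) : ℕ :=
  sSup {m | ∃ M ⊆ F, M.card = m ∧ (M : Set (Finset ℕ)).PairwiseDisjoint id}

/-- `F` is non-trivial on `[n]`: no vertex of `[n] = {1,…,n}` is isolated. -/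
def NonTrivial (n : ℕ) (F : Finset (Finset ℕ)) : Prop :=
  ∀ v ∈ Finset.Icc 1 n, ∃ A ∈ F, v ∈ A

/-- `F` is shifted on `Y`: all `(x,y)`-shifts with `x < y` in `Y` fix `F`. -/
def ShiftedOn (Y : Finset ℕ) (F : Finset (Finset ℕ)) : Prop :=
  ∀ x ∈ Y, ∀ y ∈ Y, x < y → shiftFam x y F = F

/-- The clique number of the `k`-graph `F` on `[n]`. -/
noncomputable def cliqueNum (n k : ℕ) (F : Finset (Finset ℕ)) : ℕ :=
  sSup {m | ∃ U ⊆ Finset.Icc 1 n, U.card = m ∧ Finset.powersetCard k U ⊆ F}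

/-- The vertex-cover number of the `k`-graph `F` on `[n]`. -/
noncomputable def coverNum (n : ℕ) (F : Finset (Finset ℕ)) : ℕ :=
  sInf {t | ∃ T ⊆ Finset.Icc 1 n, T.card = t ∧ ∀ A ∈ F, (A ∩ T).Nonempty}

/-- The link `N_F(x)`. -/
def nbr (F : Finset (Finset ℕ)) (x : ℕ) : Finset (Finset ℕ) :=
  (F.filter fun A => x ∈ A).image fun A => A.erase x

/-- The link `N_F(x,y)`. -/
def nbr2 (F : Finset (Finset ℕ)) (x y : ℕ) : Finset (Finset ℕ) :=
  (F.filter fun A => x ∈ A ∧ y ∈ A).image fun A => (A.erase x).erase y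

/-- The link `N_F(x, ȳ)`. -/
def nbrBar (F : Finset (Finset ℕ)) (x y : ℕ) : Finset (Finset ℕ) :=
  (F.filter fun A => x ∈ A ∧ y ∉ A).image fun A => A.erase x

/-- The extremal family `E₀(n,k,s)`. -/
def E0 (n k s : ℕ) : Finset (Finset ℕ) :=
  Finset.powersetCard k (Finset.Icc 1 (k * s + k - 2)) ∪
  ((Finset.powersetCard k (Finset.Icc 1 n)).filter
    (fun A => A \ Finset.Icc 1 (k * s + k - 2) = {k * s + k - 1} ∧
      (A ∩ Finset.Icc 1 (k - 1)).Nonempty)) ∪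
  ((Finset.Icc (k * s + k) n).image (fun x => insert x (Finset.Icc 1 (k - 1))))

open Classical in
/-- The extremal family `E₁(n,k,s)`. -/
noncomputable def E1 (n k s : ℕ) : Finset (Finset ℕ) :=
  Finset.powersetCard k (Finset.Icc 1 (k * s + k - 2)) ∪
  ((Finset.powersetCard k (Finset.Icc 1 n)).filter
    (fun A => 1 ∈ A ∧ ∃ x ∈ Finset.Icc (k * s + k - 1) n,
      A \ Finset.Icc 1 (k * s + k - 2) = {x}))

/-- `F` is `s`-saturated on `[n]`. -/
def Saturated (n k s : ℕ) (F : Finset (Finset ℕ)) : Prop :=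
  matchingNumber F ≤ s ∧
  ∀ G ∈ Finset.powersetCard k (Finset.Icc 1 n), G ∉ F →
    matchingNumber (insert G F) = s + 1

/-!
Let `U` be a maximum clique, put `|U| = ks + k - 1 - d` with `d ≥ 2`, and call an edge *exiting* if
it is not contained in `U`. A matching `M` of `F` satisfies `|V(M) ∪ U| ≤ ks + k - 1`, since
otherwise the rest of `U` would complete `M` to `s + 1` disjoint edges; so a matching of exiting
edges has at most `d` members. Given `x ∉ U`, saturation applied to a non-edge inside `U ∪ {x}`
yields a matching that avoids `x` and attains equality above. Its exiting edges cover a set of at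
most `kd` vertices which avoids `x` and meets every exiting edge.

Hence each vertex outside `U` lies on at most `kd * C(n-2, k-2)` exiting edges, while a greedy
choice shows that at most `d` vertices lie on more than that many. The latter belong to `U`, so each
lies on at most `C(n, k-1) - C(|U|, k-1)` exiting edges. Summing over at most `kd` vertices that
meet all exiting edges bounds `|F|`, and since `d ≤ εn + k` the error `(kd)² C(n-2, k-2)` is
absorbed by `(d - 2)(2 C(|U|, k-1) - C(n, k-1)) + 8εk⁴ C(n, k-1)`.
-/

open Finset

section Matchings

variable {α : Type*} [DecidableEq α] {k b : ℕ} {M : Finset (Finset α)} {C T U e : Finset α}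

lemma pairwiseDisjoint_insert_of_disjoint_biUnion (hM : (M : Set (Finset α)).PairwiseDisjoint id)
    (he : Disjoint e (M.biUnion id)) :
    ((insert e M : Finset (Finset α)) : Set (Finset α)).PairwiseDisjoint id := by
  rw [coe_insert]
  exact hM.insert fun f hf _ => (disjoint_biUnion_right _ _ _).1 he f hf

lemma notMem_of_disjoint_biUnion (hne : e.Nonempty) (he : Disjoint e (M.biUnion id)) : e ∉ M :=
  fun heM => hne.ne_empty (disjoint_self.1 ((disjoint_biUnion_right _ _ _).1 he e heM))

lemma card_biUnion_of_sized (hM : (M : Set (Finset α)).PairwiseDisjoint id)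
    (hk : (M : Set (Finset α)).Sized k) : #(M.biUnion id) = k * #M := by
  rw [card_biUnion hM, mul_comm]
  exact sum_const_nat fun e he => hk he

lemma card_le_card_biUnion_sdiff (hM : (M : Set (Finset α)).PairwiseDisjoint id)
    (hU : ∀ e ∈ M, ¬ e ⊆ U) : #M ≤ #(M.biUnion id \ U) := by
  have hdisj : (M : Set (Finset α)).PairwiseDisjoint (· \ U) :=
    hM.mono fun e => (sdiff_subset : e \ U ⊆ e)
  calc #M ≤ #(M.biUnion (· \ U)) :=
        card_le_card_biUnion hdisj fun e he => sdiff_nonempty.2 (hU e he)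
    _ ≤ #(M.biUnion id \ U) := card_le_card <| biUnion_subset.2 fun e he =>
        sdiff_subset_sdiff (subset_biUnion_of_mem id he) le_rfl

lemma biUnion_filter_not_subset_union :
    {e ∈ M | ¬ e ⊆ U}.biUnion id ∪ U = M.biUnion id ∪ U := by
  ext y
  simp only [mem_union, mem_biUnion, mem_filter, id]
  grind

/-- The greedy choice: processing the vertices of `C` one by one, pick for the current vertex an
edge that avoids `T`, the edges picked so far and the vertices still to be processed. -/
lemma exists_matching_of_forall_exists_disjoint {E : α → Finset (Finset α)} (hk : 0 < k)
    (hE : ∀ v, (E v : Set (Finset α)).Sized k)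
    (h : ∀ v ∈ C, ∀ S : Finset α, v ∉ S → #S ≤ b → ∃ e ∈ E v, Disjoint e S)
    (hCT : Disjoint C T) (hb : k * #C + #T ≤ b + k) :
    ∃ M ⊆ C.biUnion E, (M : Set (Finset α)).PairwiseDisjoint id ∧ #M = #C ∧
      Disjoint (M.biUnion id) T := by
  induction C using Finset.induction_on generalizing T with
  | empty => exact ⟨∅, by simp⟩
  | insert v C hvC ih =>
    rw [disjoint_insert_left] at hCT
    rw [card_insert_of_notMem hvC] at hb ⊢
    have hCk : #C ≤ k * #C := Nat.le_mul_of_pos_left _ hk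
    obtain ⟨e, heE, heTC⟩ := h v (mem_insert_self _ _) (T ∪ C) (by simp [hCT.1, hvC])
      ((card_union_le _ _).trans (by linarith))
    obtain ⟨heT, heC⟩ := disjoint_union_right.1 heTC
    have hek : #e = k := hE v heE
    obtain ⟨M, hME, hM, hMcard, hMdisj⟩ := ih (T := e ∪ T)
      (fun w hw => h w (mem_insert_of_mem hw)) (disjoint_union_right.2 ⟨heC.symm, hCT.2⟩)
      (by have := card_union_le e T; linarith)
    obtain ⟨hMe, hMT⟩ := disjoint_union_right.1 hMdisj
    refine ⟨insert e M, ?_, pairwiseDisjoint_insert_of_disjoint_biUnion hM hMe.symm, ?_, ?_⟩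
    · rw [biUnion_insert]
      exact insert_subset (mem_union_left _ heE) (hME.trans subset_union_right)
    · rw [card_insert_of_notMem (notMem_of_disjoint_biUnion (card_pos.1 (hek ▸ hk)) hMe.symm),
        hMcard]
    · rw [biUnion_insert, disjoint_union_left]
      exact ⟨heT, hMT⟩

end Matchings

section ExitEdges

variable {α : Type*} [DecidableEq α] {k : ℕ} {F : Finset (Finset α)} {S U V X : Finset α} {v w : α}

/-- The edges of `F` that pass through the vertex `v` and are not contained in `U`. They are
counted when `U` is a clique of `F`, whose own edges are counted separately. -/
def exitEdges (F : Finset (Finset α)) (U : Finset α) (v : α) : Finset (Finset α) :=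
  {e ∈ F | v ∈ e ∧ ¬ e ⊆ U}

lemma mem_exitEdges {e : Finset α} : e ∈ exitEdges F U v ↔ e ∈ F ∧ v ∈ e ∧ ¬ e ⊆ U :=
  mem_filter

lemma card_filter_mem_mem_le (hk : 2 ≤ k) (hF : F ⊆ powersetCard k X) (hvw : v ≠ w) :
    #{e ∈ F | v ∈ e ∧ w ∈ e} ≤ (#X - 2).choose (k - 2) := by
  have hpair : #({v, w} : Finset α) = 2 := card_pair hvw
  have hsub : {e ∈ F | v ∈ e ∧ w ∈ e} ⊆ {e ∈ powersetCard k X | {v, w} ⊆ e} := fun e he => by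
    obtain ⟨heF, hve, hwe⟩ := mem_filter.1 he
    exact mem_filter.2 ⟨hF heF, insert_subset hve (singleton_subset_iff.2 hwe)⟩
  by_cases hX : {v, w} ⊆ X
  · calc #{e ∈ F | v ∈ e ∧ w ∈ e} ≤ #{e ∈ powersetCard k X | {v, w} ⊆ e} := card_le_card hsub
      _ = (#X - 2).choose (k - 2) := by
        rw [card_filter_powersetCard_subset _ _ _ hX (hpair ▸ hk), hpair]
  · have hempty : {e ∈ powersetCard k X | {v, w} ⊆ e} = ∅ :=
      filter_eq_empty_iff.2 fun e he hvwe => hX (hvwe.trans (mem_powersetCard.1 he).1)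
    have hnone : {e ∈ F | v ∈ e ∧ w ∈ e} = ∅ := subset_empty.1 (hsub.trans hempty.subset)
    rw [hnone, card_empty]
    exact Nat.zero_le _

lemma card_filter_mem_not_disjoint_le (hk : 2 ≤ k) (hF : F ⊆ powersetCard k X) (hvS : v ∉ S) :
    #{e ∈ F | v ∈ e ∧ ¬ Disjoint e S} ≤ #S * (#X - 2).choose (k - 2) := by
  have hcover : {e ∈ F | v ∈ e ∧ ¬ Disjoint e S} ⊆ S.biUnion fun w => {e ∈ F | v ∈ e ∧ w ∈ e} := by
    intro e he
    obtain ⟨heF, hve, heS⟩ := mem_filter.1 he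
    obtain ⟨w, hwe, hwS⟩ := not_disjoint_iff.1 heS
    exact mem_biUnion.2 ⟨w, hwS, mem_filter.2 ⟨heF, hve, hwe⟩⟩
  exact (card_le_card hcover).trans <| card_biUnion_le_card_mul _ _ _ fun w hw =>
    card_filter_mem_mem_le hk hF fun hvw => hvS (hvw ▸ hw)

lemma exists_mem_exitEdges_disjoint (hk : 2 ≤ k) (hF : F ⊆ powersetCard k X) (hvS : v ∉ S)
    (hS : #S * (#X - 2).choose (k - 2) < #(exitEdges F U v)) :
    ∃ e ∈ exitEdges F U v, Disjoint e S := by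
  obtain ⟨e, he, heS⟩ := exists_mem_notMem_of_card_lt_card
    ((card_filter_mem_not_disjoint_le hk hF hvS).trans_lt hS)
  obtain ⟨heF, hve, -⟩ := mem_exitEdges.1 he
  exact ⟨e, he, by_contra fun hdisj => heS (mem_filter.2 ⟨heF, hve, hdisj⟩)⟩

lemma card_exitEdges_le_of_forall_not_disjoint (hk : 2 ≤ k) (hF : F ⊆ powersetCard k X)
    (hvS : v ∉ S) (hS : ∀ e ∈ F, ¬ e ⊆ U → ¬ Disjoint e S) :
    #(exitEdges F U v) ≤ #S * (#X - 2).choose (k - 2) := by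
  by_contra! hlt
  obtain ⟨e, he, heS⟩ := exists_mem_exitEdges_disjoint hk hF hvS hlt
  obtain ⟨heF, -, heU⟩ := mem_exitEdges.1 he
  exact hS e heF heU heS

/-- Deleting `v` maps the exiting edges through `v` injectively to `(k - 1)`-sets not inside `U`. -/
lemma card_exitEdges_le_of_mem (hF : F ⊆ powersetCard k X) (hUX : U ⊆ X) (hvU : v ∈ U) :
    #(exitEdges F U v) ≤ (#X).choose (k - 1) - (#U).choose (k - 1) := by
  rw [← card_powersetCard, ← card_powersetCard, ← card_sdiff_of_subset (powersetCard_mono hUX)]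
  refine card_le_card_of_injOn (fun e => e.erase v) (fun e he => ?_)
    ((erase_injOn' v).mono fun e he => (mem_exitEdges.1 he).2.1)
  obtain ⟨heF, hve, heU⟩ := mem_exitEdges.1 he
  obtain ⟨heX, hek⟩ := mem_powersetCard.1 (hF heF)
  refine mem_sdiff.2 ⟨mem_powersetCard.2 ⟨(erase_subset _ _).trans heX, ?_⟩, fun h => heU ?_⟩
  · rw [card_erase_of_mem hve, hek]
  · rw [← insert_erase hve]
    exact insert_subset hvU (mem_powersetCard.1 h).1

lemma card_le_choose_add_sum_card_exitEdges (hF : (F : Set (Finset α)).Sized k)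
    (hV : ∀ e ∈ F, ¬ e ⊆ U → ¬ Disjoint e V) :
    #F ≤ (#U).choose k + ∑ v ∈ V, #(exitEdges F U v) := by
  have hcover : F ⊆ powersetCard k U ∪ V.biUnion (exitEdges F U) := by
    intro e he
    by_cases heU : e ⊆ U
    · exact mem_union_left _ (mem_powersetCard.2 ⟨heU, hF he⟩)
    · obtain ⟨v, hve, hvV⟩ := not_disjoint_iff.1 (hV e he heU)
      exact mem_union_right _ (mem_biUnion.2 ⟨v, hvV, mem_exitEdges.2 ⟨he, hve, heU⟩⟩)
  calc #F ≤ #(powersetCard k U) + #(V.biUnion (exitEdges F U)) :=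
        (card_le_card hcover).trans (card_union_le _ _)
    _ ≤ (#U).choose k + ∑ v ∈ V, #(exitEdges F U v) := by
        rw [card_powersetCard]
        exact Nat.add_le_add_left card_biUnion_le _

end ExitEdges

section MatchingNumber

variable {F M : Finset (Finset ℕ)}

lemma bddAbove_card_matchings (F : Finset (Finset ℕ)) :
    BddAbove {m | ∃ M ⊆ F, #M = m ∧ (M : Set (Finset ℕ)).PairwiseDisjoint id} :=
  ⟨#F, by rintro _ ⟨M, hMF, rfl, -⟩; exact card_le_card hMF⟩

lemma card_le_matchingNumber (hMF : M ⊆ F) (hM : (M : Set (Finset ℕ)).PairwiseDisjoint id) :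
    #M ≤ matchingNumber F :=
  le_csSup (bddAbove_card_matchings F) ⟨M, hMF, rfl, hM⟩

lemma exists_matching_card_eq_matchingNumber (F : Finset (Finset ℕ)) :
    ∃ M ⊆ F, #M = matchingNumber F ∧ (M : Set (Finset ℕ)).PairwiseDisjoint id :=
  Nat.sSup_mem (s := {m | ∃ M ⊆ F, #M = m ∧ (M : Set (Finset ℕ)).PairwiseDisjoint id})
    ⟨0, ∅, by simp⟩ (bddAbove_card_matchings F)

lemma Saturated.exists_matching_disjoint {n k s : ℕ} {G : Finset ℕ} (hF : Saturated n k s F)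
    (hG : G ∈ powersetCard k (Icc 1 n)) (hGF : G ∉ F) :
    ∃ M ⊆ F, (M : Set (Finset ℕ)).PairwiseDisjoint id ∧ #M = s ∧ Disjoint G (M.biUnion id) := by
  obtain ⟨M, hMF, hMcard, hM⟩ := exists_matching_card_eq_matchingNumber (insert G F)
  rw [hF.2 G hG hGF] at hMcard
  have hGM : G ∈ M := by
    by_contra hGM
    have := (card_le_matchingNumber ((subset_insert_iff_of_notMem hGM).1 hMF) hM).trans hF.1
    omega
  refine ⟨M.erase G, subset_insert_iff.1 hMF, hM.subset (coe_subset.2 (erase_subset _ _)), ?_, ?_⟩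
  · rw [card_erase_of_mem hGM, hMcard, Nat.add_sub_cancel]
  · refine (disjoint_biUnion_right _ _ _).2 fun e he => ?_
    exact hM hGM (mem_of_mem_erase he) (ne_of_mem_erase he).symm

end MatchingNumber

section CliqueNumber

variable {n k x : ℕ} {F : Finset (Finset ℕ)} {U : Finset ℕ}

/-- `U` is a clique of the `k`-graph `F` on `[n]` that has the largest possible size. -/
structure IsMaxClique (n k : ℕ) (F : Finset (Finset ℕ)) (U : Finset ℕ) : Prop where
  subset_Icc : U ⊆ Icc 1 n
  powersetCard_subset : powersetCard k U ⊆ F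
  card_eq : #U = cliqueNum n k F

lemma bddAbove_card_cliques (n k : ℕ) (F : Finset (Finset ℕ)) :
    BddAbove {m | ∃ U ⊆ Icc 1 n, #U = m ∧ powersetCard k U ⊆ F} :=
  ⟨#(Icc 1 n), by rintro _ ⟨U, hU, rfl, -⟩; exact card_le_card hU⟩

lemma card_le_cliqueNum (hU : U ⊆ Icc 1 n) (hUF : powersetCard k U ⊆ F) :
    #U ≤ cliqueNum n k F :=
  le_csSup (bddAbove_card_cliques n k F) ⟨U, hU, rfl, hUF⟩

lemma exists_isMaxClique (n : ℕ) (hk : 0 < k) (F : Finset (Finset ℕ)) :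
    ∃ U, IsMaxClique n k F U := by
  obtain ⟨U, hU, hcard, hUF⟩ := Nat.sSup_mem
    (s := {m | ∃ U ⊆ Icc 1 n, #U = m ∧ powersetCard k U ⊆ F})
    ⟨0, ∅, empty_subset _, card_empty, by
      rw [powersetCard_eq_empty.2 (by rwa [card_empty])]
      exact empty_subset _⟩
    (bddAbove_card_cliques n k F)
  exact ⟨U, hU, hUF, hcard⟩

lemma IsMaxClique.exists_notMem (hU : IsMaxClique n k F U) (hx : x ∈ Icc 1 n) (hxU : x ∉ U) :
    ∃ G ∈ powersetCard k (insert x U), x ∈ G ∧ G ∉ F := by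
  obtain ⟨G, hG, hGF⟩ : ∃ G ∈ powersetCard k (insert x U), G ∉ F := by
    by_contra! hclique
    have := card_le_cliqueNum (insert_subset hx hU.subset_Icc) hclique
    rw [card_insert_of_notMem hxU, hU.card_eq] at this
    omega
  obtain ⟨hGU, hGk⟩ := mem_powersetCard.1 hG
  refine ⟨G, hG, by_contra fun hxG => hGF (hU.powersetCard_subset ?_), hGF⟩
  exact mem_powersetCard.2 ⟨(subset_insert_iff_of_notMem hxG).1 hGU, hGk⟩

end CliqueNumber

section MatchingsAndCliques

variable {n k s d x : ℕ} {F M : Finset (Finset ℕ)} {B U e : Finset ℕ}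

/-- As long as `U` has `k` vertices off `M`, adding an edge on them to `M` leaves `V(M) ∪ U`
unchanged; once it has fewer, `|V(M) ∪ U| ≤ k |M| + (k - 1)`. -/
lemma card_biUnion_union_clique_lt (hk : 0 < k) (hF : (F : Set (Finset ℕ)).Sized k)
    (hν : matchingNumber F ≤ s) (hUF : powersetCard k U ⊆ F) (hMF : M ⊆ F)
    (hM : (M : Set (Finset ℕ)).PairwiseDisjoint id) :
    #(M.biUnion id ∪ U) < k * (s + 1) := by
  induction hr : #(U \ M.biUnion id) using Nat.strong_induction_on generalizing M with
  | _ r ih =>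
    by_cases hrk : k ≤ r
    · obtain ⟨e, heU, hek⟩ := exists_subset_card_eq (hr ▸ hrk)
      have heM : Disjoint e (M.biUnion id) := disjoint_of_subset_left heU sdiff_disjoint
      have heF : e ∈ F := hUF (mem_powersetCard.2 ⟨heU.trans sdiff_subset, hek⟩)
      have hunion : (insert e M).biUnion id ∪ U = M.biUnion id ∪ U := by
        rw [biUnion_insert, id, union_assoc, union_eq_right]
        exact heU.trans (sdiff_subset.trans subset_union_right)
      have hrest : #(U \ (insert e M).biUnion id) < r := by
        rw [biUnion_insert, id, union_comm, ← sup_eq_union, ← sdiff_sdiff_left,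
          card_sdiff_of_subset heU, hr, hek]
        omega
      rw [← hunion]
      exact ih _ hrest (insert_subset heF hMF)
        (pairwiseDisjoint_insert_of_disjoint_biUnion hM heM) rfl
    · have hcard : #(M.biUnion id) = k * #M :=
        card_biUnion_of_sized hM (hF.mono (coe_subset.2 hMF))
      have hMs : k * #M ≤ k * s :=
        Nat.mul_le_mul_left k ((card_le_matchingNumber hMF hM).trans hν)
      rw [union_comm, ← card_sdiff_add_card, hr, hcard, mul_add_one]
      omega

lemma card_le_of_forall_not_subset_clique (hk : 0 < k) (hF : (F : Set (Finset ℕ)).Sized k)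
    (hν : matchingNumber F ≤ s) (hUF : powersetCard k U ⊆ F) (hd : #U + d + 1 = k * (s + 1))
    (hMF : M ⊆ F) (hM : (M : Set (Finset ℕ)).PairwiseDisjoint id) (hMU : ∀ e ∈ M, ¬ e ⊆ U) :
    #M ≤ d := by
  have hlt := card_biUnion_union_clique_lt hk hF hν hUF hMF hM
  have hle := card_le_card_biUnion_sdiff hM hMU
  rw [← card_sdiff_add_card] at hlt
  omega

lemma not_disjoint_biUnion_of_le_card (hk : 0 < k) (hF : (F : Set (Finset ℕ)).Sized k)
    (hν : matchingNumber F ≤ s) (hUF : powersetCard k U ⊆ F) (hMF : M ⊆ F)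
    (hM : (M : Set (Finset ℕ)).PairwiseDisjoint id)
    (hcard : k * (s + 1) ≤ #(M.biUnion id ∪ U) + 1) (heF : e ∈ F) (heU : ¬ e ⊆ U) :
    ¬ Disjoint e (M.biUnion id) := by
  intro heM
  have hlt := card_biUnion_union_clique_lt hk hF hν hUF (insert_subset heF hMF)
    (pairwiseDisjoint_insert_of_disjoint_biUnion hM heM)
  obtain ⟨y, hye, hyU⟩ := not_subset.1 heU
  have hy : y ∉ M.biUnion id ∪ U := by
    rw [mem_union, not_or]
    exact ⟨disjoint_left.1 heM hye, hyU⟩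
  have hle : #(insert y (M.biUnion id ∪ U)) ≤ #((insert e M).biUnion id ∪ U) := by
    rw [biUnion_insert, id, union_assoc]
    exact card_le_card (insert_subset (mem_union_left _ hye) subset_union_right)
  rw [card_insert_of_notMem hy] at hle
  omega

lemma Saturated.exists_matching_notMem_le_card (hsat : Saturated n k s F)
    (hF : (F : Set (Finset ℕ)).Sized k) (hU : IsMaxClique n k F U) (hx : x ∈ Icc 1 n)
    (hxU : x ∉ U) :
    ∃ M ⊆ F, (M : Set (Finset ℕ)).PairwiseDisjoint id ∧ x ∉ M.biUnion id ∧
      k * (s + 1) ≤ #(M.biUnion id ∪ U) + 1 := by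
  obtain ⟨G, hG, hxG, hGF⟩ := hU.exists_notMem hx hxU
  obtain ⟨hGU, hGk⟩ := mem_powersetCard.1 hG
  have hGn : G ∈ powersetCard k (Icc 1 n) :=
    powersetCard_mono (insert_subset hx hU.subset_Icc) hG
  obtain ⟨M, hMF, hM, hMs, hGM⟩ := hsat.exists_matching_disjoint hGn hGF
  refine ⟨M, hMF, hM, disjoint_left.1 hGM hxG, ?_⟩
  have hle : #(M.biUnion id ∪ G.erase x) ≤ #(M.biUnion id ∪ U) :=
    card_le_card (union_subset_union_right (subset_insert_iff.1 hGU))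
  have hdisj : Disjoint (M.biUnion id) (G.erase x) :=
    disjoint_of_subset_right (erase_subset _ _) hGM.symm
  rw [card_union_of_disjoint hdisj, card_biUnion_of_sized hM (hF.mono (coe_subset.2 hMF)), hMs,
    card_erase_of_mem hxG, hGk] at hle
  rw [mul_add_one]
  omega

lemma Saturated.exists_notMem_forall_not_disjoint (hsat : Saturated n k s F) (hk : 0 < k)
    (hF : (F : Set (Finset ℕ)).Sized k) (hU : IsMaxClique n k F U)
    (hd : #U + d + 1 = k * (s + 1)) (hx : x ∈ Icc 1 n) (hxU : x ∉ U) :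
    ∃ V : Finset ℕ, x ∉ V ∧ #V ≤ k * d ∧ ∀ e ∈ F, ¬ e ⊆ U → ¬ Disjoint e V := by
  obtain ⟨M, hMF, hM, hxM, hcard⟩ := hsat.exists_matching_notMem_le_card hF hU hx hxU
  set N := {e ∈ M | ¬ e ⊆ U} with hN
  have hNM : N ⊆ M := filter_subset _ _
  have hNF : N ⊆ F := hNM.trans hMF
  have hNdisj : (N : Set (Finset ℕ)).PairwiseDisjoint id := hM.subset (coe_subset.2 hNM)
  have hNcard : #N ≤ d :=
    card_le_of_forall_not_subset_clique hk hF hsat.1 hU.powersetCard_subset hd hNF hNdisj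
      fun e he => (mem_filter.1 he).2
  refine ⟨N.biUnion id, fun hxN => hxM (biUnion_subset_biUnion_of_subset_left id hNM hxN), ?_,
    fun e heF heU => ?_⟩
  · rw [card_biUnion_of_sized hNdisj (hF.mono (coe_subset.2 hNF))]
    exact Nat.mul_le_mul_left k hNcard
  · rw [← biUnion_filter_not_subset_union, ← hN] at hcard
    exact not_disjoint_biUnion_of_le_card hk hF hsat.1 hU.powersetCard_subset hNF hNdisj hcard
      heF heU

lemma card_le_of_forall_lt_card_exitEdges {X : Finset ℕ} (hk : 2 ≤ k)
    (hF : F ⊆ powersetCard k X) (hν : matchingNumber F ≤ s) (hUF : powersetCard k U ⊆ F)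
    (hd : #U + d + 1 = k * (s + 1))
    (hB : ∀ v ∈ B, k * d * (#X - 2).choose (k - 2) < #(exitEdges F U v)) : #B ≤ d := by
  by_contra! hdB
  obtain ⟨C, hCB, hC⟩ := exists_subset_card_eq (Nat.succ_le_of_lt hdB)
  have hsized : (F : Set (Finset ℕ)).Sized k :=
    (Set.sized_powersetCard X k).mono (coe_subset.2 hF)
  have hexit : ∀ e ∈ C.biUnion (exitEdges F U), e ∈ F ∧ ¬ e ⊆ U := fun e he => by
    obtain ⟨v, -, hev⟩ := mem_biUnion.1 he
    exact ⟨(mem_exitEdges.1 hev).1, (mem_exitEdges.1 hev).2.2⟩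
  obtain ⟨M, hME, hM, hMC, -⟩ := exists_matching_of_forall_exists_disjoint (b := k * d) (C := C)
    (T := ∅) (E := exitEdges F U) (by omega)
    (fun v => hsized.mono (coe_subset.2 (filter_subset _ _)))
    (fun v hv S hvS hS => exists_mem_exitEdges_disjoint hk hF hvS
      ((Nat.mul_le_mul_right _ hS).trans_lt (hB v (hCB hv))))
    (disjoint_empty_right _) (by rw [hC, card_empty, Nat.mul_succ, add_zero])
  have hMd := card_le_of_forall_not_subset_clique (by omega) hsized hν hUF hd
    (fun e he => (hexit e (hME he)).1) hM (fun e he => (hexit e (hME he)).2)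
  omega

lemma Saturated.card_exitEdges_le_of_notMem {v : ℕ} (hsat : Saturated n k s F) (hk : 2 ≤ k)
    (hF : F ⊆ powersetCard k (Icc 1 n)) (hU : IsMaxClique n k F U)
    (hd : #U + d + 1 = k * (s + 1)) (hvU : v ∉ U) :
    #(exitEdges F U v) ≤ k * d * (n - 2).choose (k - 2) := by
  obtain hempty | ⟨e, he⟩ := (exitEdges F U v).eq_empty_or_nonempty
  · rw [hempty, card_empty]
    exact Nat.zero_le _
  · obtain ⟨heF, hve, -⟩ := mem_exitEdges.1 he
    have hvn : v ∈ Icc 1 n := (mem_powersetCard.1 (hF heF)).1 hve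
    obtain ⟨V, hvV, hVcard, hV⟩ := hsat.exists_notMem_forall_not_disjoint (by omega)
      ((Set.sized_powersetCard _ k).mono (coe_subset.2 hF)) hU hd hvn hvU
    have hle := card_exitEdges_le_of_forall_not_disjoint hk hF hvV hV
    rw [Nat.card_Icc, Nat.add_sub_cancel] at hle
    exact hle.trans (Nat.mul_le_mul_right _ hVcard)

lemma Saturated.sum_card_exitEdges_le {V : Finset ℕ} (hsat : Saturated n k s F) (hk : 2 ≤ k)
    (hF : F ⊆ powersetCard k (Icc 1 n)) (hU : IsMaxClique n k F U)
    (hd : #U + d + 1 = k * (s + 1)) (hV : #V ≤ k * d) :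
    ∑ v ∈ V, #(exitEdges F U v) ≤
      d * (n.choose (k - 1) - (#U).choose (k - 1)) + k * d * (k * d * (n - 2).choose (k - 2)) := by
  set m := k * d * (n - 2).choose (k - 2)
  have hn : #(Icc 1 n) = n := by rw [Nat.card_Icc, Nat.add_sub_cancel]
  set B := {v ∈ V | m < #(exitEdges F U v)}
  have hBcard : #B ≤ d :=
    card_le_of_forall_lt_card_exitEdges hk hF hsat.1 hU.powersetCard_subset hd fun v hv => by
      rw [hn]
      exact (mem_filter.1 hv).2
  have hBU : ∀ v ∈ B, v ∈ U := fun v hv => by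
    by_contra hvU
    exact (mem_filter.1 hv).2.not_ge (hsat.card_exitEdges_le_of_notMem hk hF hU hd hvU)
  rw [← sum_filter_add_sum_filter_not V fun v => m < #(exitEdges F U v)]
  gcongr ?_ + ?_
  · calc ∑ v ∈ B, #(exitEdges F U v) ≤ #B * (n.choose (k - 1) - (#U).choose (k - 1)) :=
          sum_le_card_nsmul _ _ _ fun v hv =>
            hn ▸ card_exitEdges_le_of_mem hF hU.subset_Icc (hBU v hv)
      _ ≤ d * (n.choose (k - 1) - (#U).choose (k - 1)) := Nat.mul_le_mul_right _ hBcard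
  · calc ∑ v ∈ V with ¬ m < #(exitEdges F U v), #(exitEdges F U v)
        ≤ #{v ∈ V | ¬ m < #(exitEdges F U v)} * m :=
          sum_le_card_nsmul _ _ _ fun v hv => not_lt.1 (mem_filter.1 hv).2
      _ ≤ k * d * m := Nat.mul_le_mul_right _ ((card_filter_le _ _).trans hV)

theorem Saturated.card_le (hsat : Saturated n k s F) (hk : 2 ≤ k)
    (hF : F ⊆ powersetCard k (Icc 1 n)) (hU : IsMaxClique n k F U)
    (hd : #U + d + 1 = k * (s + 1)) (hUn : #U < n) :
    #F ≤ (#U).choose k + d * (n.choose (k - 1) - (#U).choose (k - 1)) +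
      k * d * (k * d * (n - 2).choose (k - 2)) := by
  have hsized : (F : Set (Finset ℕ)).Sized k :=
    (Set.sized_powersetCard _ k).mono (coe_subset.2 hF)
  obtain ⟨x, hx, hxU⟩ : ∃ x, x ∈ Icc 1 n ∧ x ∉ U :=
    exists_mem_notMem_of_card_lt_card (by rwa [Nat.card_Icc, Nat.add_sub_cancel])
  obtain ⟨V, -, hVcard, hV⟩ :=
    hsat.exists_notMem_forall_not_disjoint (by omega) hsized hU hd hx hxU
  have hF_le := card_le_choose_add_sum_card_exitEdges hsized hV
  have hsum_le := hsat.sum_card_exitEdges_le hk hF hU hd hVcard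
  omega

end MatchingsAndCliques

section Estimates

variable {k n s u d : ℕ} {ε : ℝ}

lemma choose_succ_add_mul_choose_le (u d j : ℕ) :
    u.choose (j + 1) + d * u.choose j ≤ (u + d).choose (j + 1) := by
  induction d with
  | zero => simp
  | succ d ih =>
    have hmono : u.choose j ≤ (u + d).choose j := Nat.choose_le_add u d j
    rw [← add_assoc, Nat.choose_succ_succ', add_one_mul]
    omega

lemma choose_succ_le_add_mul_choose (u w j : ℕ) :
    (u + w).choose (j + 1) ≤ u.choose (j + 1) + w * (u + w - 1).choose j := by
  induction w with
  | zero => simp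
  | succ w ih =>
    have hmono : w * (u + w - 1).choose j ≤ w * (u + w).choose j :=
      Nat.mul_le_mul_left w (Nat.choose_le_choose j (Nat.sub_le _ _))
    rw [← add_assoc, Nat.choose_succ_succ', Nat.add_sub_cancel, add_one_mul]
    omega

lemma sub_one_mul_choose_sub_one (hk : 2 ≤ k) (hn : 0 < n) :
    ((k : ℝ) - 1) * n.choose (k - 1) = n * (n - 1).choose (k - 2) := by
  obtain ⟨j, rfl⟩ := Nat.exists_eq_add_of_le' hk
  obtain ⟨m, rfl⟩ := Nat.exists_eq_add_of_le' hn
  have hid : ((m + 1) * m.choose j : ℝ) = (m + 1).choose (j + 1) * (j + 1) :=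
    mod_cast Nat.add_one_mul_choose_eq m j
  simp only [Nat.add_sub_cancel, Nat.reduceSubDiff]
  push_cast
  linarith

lemma mul_choose_le_choose_sub_one (hk : 2 ≤ k) (hn : 0 < n) :
    ((n : ℝ) / k + n / k ^ 2) * (n - 1).choose (k - 2) ≤ n.choose (k - 1) := by
  have hk₂ : (2 : ℝ) ≤ k := mod_cast hk
  set Q : ℝ := ↑((n - 1).choose (k - 2))
  have hnQ : 0 ≤ (n : ℝ) * Q / k ^ 2 := by positivity
  refine le_of_mul_le_mul_left ?_ (show (0 : ℝ) < k - 1 by linarith)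
  calc ((k : ℝ) - 1) * ((n / k + n / k ^ 2) * Q) = n * Q - n * Q / k ^ 2 := by field_simp; ring
    _ ≤ n * Q := by linarith
    _ = (k - 1) * n.choose (k - 1) := (sub_one_mul_choose_sub_one hk hn).symm

lemma mul_choose_le_two_mul_choose_sub (hk : 2 ≤ k) (hε : 4 * ε * k ^ 4 ≤ 1) (hn : k ≤ ε * n)
    (hun : u ≤ n) (hu : (n : ℝ) - u ≤ n / (2 * k) + k + ε * n) :
    2 * k ^ 2 * (ε * n) * (n - 1).choose (k - 2) ≤
      2 * (u.choose (k - 1) : ℝ) - n.choose (k - 1) := by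
  have hk₂ : (2 : ℝ) ≤ k := mod_cast hk
  have hn₀ : 0 < n := Nat.pos_of_ne_zero fun h => by subst h; norm_num at hn; linarith
  have hN := mul_choose_le_choose_sub_one hk hn₀
  have hUN : (n.choose (k - 1) : ℝ) ≤ u.choose (k - 1) + (n - u) * (n - 1).choose (k - 2) := by
    obtain ⟨w, rfl⟩ := Nat.exists_eq_add_of_le hun
    obtain ⟨j, rfl⟩ := Nat.exists_eq_add_of_le' hk
    have := choose_succ_le_add_mul_choose u w j
    simp only [Nat.add_sub_cancel, Nat.reduceSubDiff]
    rw [Nat.cast_add, add_sub_cancel_left]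
    exact_mod_cast this
  set Q : ℝ := ↑((n - 1).choose (k - 2))
  have hnk : 4 * k ^ 2 * (ε * n) ≤ n / k ^ 2 := by
    rw [le_div_iff₀ (by positivity)]
    linarith [mul_le_mul_of_nonneg_right hε (Nat.cast_nonneg (α := ℝ) n)]
  have hcoeff : 2 * k ^ 2 * (ε * n) ≤ n / k + n / k ^ 2 - 2 * ((n : ℝ) - u) := by
    have hhalf : 2 * ((n : ℝ) / (2 * k)) = n / k := by field_simp
    have hsq : 2 * (ε * n) ≤ k ^ 2 * (ε * n) := by
      refine mul_le_mul_of_nonneg_right ?_ (by linarith)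
      nlinarith
    linarith
  calc 2 * k ^ 2 * (ε * n) * Q ≤ (n / k + n / k ^ 2 - 2 * ((n : ℝ) - u)) * Q := by gcongr
    _ = (n / k + n / k ^ 2) * Q - 2 * ((n - u) * Q) := by ring
    _ ≤ 2 * u.choose (k - 1) - n.choose (k - 1) := by linarith

lemma mul_mul_choose_le (hk : 2 ≤ k) (hε : 4 * ε * k ^ 4 ≤ 1) (hn : k ≤ ε * n)
    (hun : u ≤ n) (hu : (n : ℝ) - u ≤ n / (2 * k) + k + ε * n) (hd : 2 ≤ d)
    (hdn : d ≤ ε * n + k) :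
    ((k * d * (k * d * (n - 2).choose (k - 2)) : ℕ) : ℝ) ≤
      (d - 2) * (2 * u.choose (k - 1) - n.choose (k - 1)) +
        8 * ε * k ^ 4 * n.choose (k - 1) := by
  have hk₂ : (2 : ℝ) ≤ k := mod_cast hk
  have hd₂ : (0 : ℝ) ≤ d - 2 := sub_nonneg.2 (mod_cast hd)
  have hεn : 0 < ε * n := by linarith
  have hn₀ : 0 < n := Nat.pos_of_ne_zero fun h => by simp [h] at hεn
  have hε₀ : 0 < ε := pos_of_mul_pos_left hεn n.cast_nonneg
  have hgap := mul_choose_le_two_mul_choose_sub hk hε hn hun hu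
  have hQQ : ((n - 2).choose (k - 2) : ℝ) ≤ (n - 1).choose (k - 2) :=
    mod_cast Nat.choose_le_choose _ (by omega)
  have hN := mul_choose_le_choose_sub_one hk hn₀
  set Q : ℝ := ↑((n - 1).choose (k - 2))
  have hterm : 4 * k ^ 2 * (ε * n) * Q ≤ 8 * ε * k ^ 4 * n.choose (k - 1) :=
    calc 4 * k ^ 2 * (ε * n) * Q ≤ 8 * ε * k ^ 4 * ((n / k + n / k ^ 2) * Q) := by
          have : (0 : ℝ) ≤ k ^ 2 * (ε * n) * Q := by positivity
          have : (0 : ℝ) ≤ k ^ 3 * (ε * n) * Q := by positivity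
          have hexpand : 8 * ε * k ^ 4 * ((n / k + n / k ^ 2) * Q) =
              8 * (k ^ 3 * (ε * n) * Q) + 8 * (k ^ 2 * (ε * n) * Q) := by field_simp
          linarith
      _ ≤ 8 * ε * k ^ 4 * n.choose (k - 1) := by gcongr
  calc ((k * d * (k * d * (n - 2).choose (k - 2)) : ℕ) : ℝ)
      = k ^ 2 * (d * d) * (n - 2).choose (k - 2) := by push_cast; ring
    _ ≤ k ^ 2 * (d * (2 * (ε * n))) * Q := by gcongr; linarith
    _ = (d - 2) * (2 * k ^ 2 * (ε * n) * Q) + 4 * k ^ 2 * (ε * n) * Q := by ring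
    _ ≤ (d - 2) * (2 * u.choose (k - 1) - n.choose (k - 1)) +
        8 * ε * k ^ 4 * n.choose (k - 1) := by gcongr

lemma sub_le_of_mul_le (hk : 0 < k) (hε : 0 ≤ ε)
    (hs : (n : ℝ) * (1 / k - 1 / (2 * k ^ 2)) - 1 < s) (hsn : (k : ℝ) * s ≤ n)
    (hu : (1 - ε) * (k * s) ≤ u) : (n : ℝ) - u ≤ n / (2 * k) + k + ε * n := by
  have : (0 : ℝ) < k := mod_cast hk
  have hks : (n : ℝ) - n / (2 * k) - k ≤ k * s :=
    calc (n : ℝ) - n / (2 * k) - k = k * (n * (1 / k - 1 / (2 * k ^ 2)) - 1) := by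
          field_simp
      _ ≤ k * s := by gcongr
  have hεks : ε * (k * s) ≤ ε * n := by gcongr
  linarith

end Estimates

theorem stmt19_general (k : ℕ) (hk : 2 ≤ k) (ε : ℝ) (hε : 4 * ε * k ^ 4 ≤ 1) (n s : ℕ)
    (hn : k ≤ ε * n) (hs₁ : (n : ℝ) * (1 / k - 1 / (2 * k ^ 2)) - 1 < s)
    (hs₂ : (s : ℝ) ≤ ((n : ℝ) - k + 1) / k)
    (F : Finset (Finset ℕ)) (hF : F ⊆ powersetCard k (Icc 1 n)) (hsat : Saturated n k s F)
    (hω₁ : (1 - ε) * (k * s) ≤ (cliqueNum n k F : ℝ)) (hω₂ : cliqueNum n k F + 3 ≤ k * s + k) :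
    (#F : ℝ) ≤ (k * s + k - 1).choose k - 4 * ⌈((1 - ε) * (k * s) : ℝ)⌉₊.choose (k - 1)
      + (2 + 8 * ε * k ^ 4) * n.choose (k - 1) := by
  obtain ⟨U, hU⟩ := exists_isMaxClique n (show 0 < k by omega) F
  rw [← hU.card_eq] at hω₁ hω₂
  obtain ⟨d, hd⟩ : ∃ d, #U + d + 1 = k * s + k := ⟨k * s + k - 1 - #U, by omega⟩
  have hd_real : (#U + d + 1 : ℝ) = k * s + k := mod_cast hd
  have hk₂ : (2 : ℝ) ≤ k := mod_cast hk
  have hε₀ : 0 < ε := pos_of_mul_pos_left (by linarith : 0 < ε * n) n.cast_nonneg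
  have hsn_real : (k : ℝ) * s + k ≤ n + 1 := by
    rw [le_div_iff₀ (by linarith)] at hs₂
    linarith
  have hsn : k * s + k ≤ n + 1 := mod_cast hsn_real
  have hεks : ε * (k * s) ≤ ε * n := by gcongr; linarith
  have hcount : (#F : ℝ) ≤ _ :=
    Nat.cast_le.2 (hsat.card_le hk hF hU (by rw [hd, mul_add_one]) (by omega))
  have herror := mul_mul_choose_le hk hε hn (show #U ≤ n by omega)
    (sub_le_of_mul_le (by omega) hε₀.le hs₁ (by linarith) hω₁) (show 2 ≤ d by omega) (by linarith)
  have hchoose : ((#U).choose k + d * (#U).choose (k - 1) : ℝ) ≤ (k * s + k - 1).choose k := by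
    have := choose_succ_add_mul_choose_le #U d (k - 1)
    rw [Nat.sub_add_cancel (by omega), show #U + d = k * s + k - 1 by omega] at this
    exact_mod_cast this
  have hceil : (⌈((1 - ε) * (k * s) : ℝ)⌉₊.choose (k - 1) : ℝ) ≤ (#U).choose (k - 1) :=
    Nat.cast_le.2 (Nat.choose_le_choose _ (Nat.ceil_le.2 hω₁))
  rw [Nat.cast_add, Nat.cast_add, Nat.cast_mul d,
    Nat.cast_sub (Nat.choose_le_choose _ (by omega))] at hcount
  linarith

/-- Guo–Lu–Peng bound for saturated families with a large (but not too large) clique. -/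
theorem stmt19 (k : ℕ) (hk : 3 ≤ k) :
    ∃ (ε : ℝ) (n₀ : ℕ), 0 < ε ∧ 0 < n₀ ∧
      ∀ (n s : ℕ), n₀ < n →
        (n : ℝ) * (1 / k - 1 / (2 * k ^ 2)) - 1 < s → (s : ℝ) ≤ ((n : ℝ) - k + 1) / k →
        ∀ F ⊆ Finset.powersetCard k (Finset.Icc 1 n),
          Saturated n k s F → matchingNumber F ≤ s →
          (1 - ε) * (k * s) ≤ (cliqueNum n k F : ℝ) →
          cliqueNum n k F ≤ k * s + k - 3 →
          (F.card : ℝ) ≤ Nat.choose (k * s + k - 1) k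
            - 3.98 * Nat.choose ⌈((1 - ε) * (k * s) : ℝ)⌉₊ (k - 1)
            + (2 + 8 * ε * k ^ 4) * Nat.choose n (k - 1) := by
  have : 0 < k := by omega
  refine ⟨1 / (4 * k ^ 4), 4 * k ^ 5, by positivity, by positivity,
    fun n s hn hs₁ hs₂ F hF hsat _ hω₁ hω₂ => ?_⟩
  have hn' : (4 * k ^ 5 : ℝ) ≤ n := mod_cast hn.le
  refine (stmt19_general k (by omega) _ (by field_simp; rfl) n s ?_ hs₁ hs₂ F hF hsat hω₁
    (by omega)).trans ?_
  · rw [one_div_mul_eq_div, le_div_iff₀ (by positivity)]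
    linarith
  · gcongr
    norm_num
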